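/- arXiv:1907.07926 — 2 statements merged into one kernel-verified Lean document; each statement's English description precedes it below -/
import Mathlib

section
/- Let 2 < q < 4 and 0 < μ < (√3/2)·π. Then F_{6,q} is bounded below on the set of u ∈ H¹(ℝ) with ‖u‖₂² = μ, there exists u₀ in this set with F_{6,q}(u₀) < 0, there exists a ground state of F_{6,q} at mass μ, and any two nonnegative ground states of F_{6,q} at mass μ coincide. -/
open MeasureTheory Real Set

noncomputable section

/-- `u ∈ H¹(ℝ)` with weak derivative `u'`: `u` is continuous, square-integrable,
`u'` is square-integrable, and `u(b) − u(a) = ∫_a^b u'(t) dt` for all `a ≤ b`. -/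
def IsH1 (u u' : ℝ → ℝ) : Prop :=
  Continuous u ∧ Integrable (fun x => (u x) ^ 2) ∧ Integrable (fun x => (u' x) ^ 2) ∧
    ∀ a b : ℝ, a ≤ b → u b - u a = ∫ t in a..b, u' t

/-- The mass `‖u‖₂² = ∫_ℝ u(x)² dx`. -/
def mass (u : ℝ → ℝ) : ℝ := ∫ x, (u x) ^ 2

/-- `D_q(u) = (1/2)∫ u'² − (1/q)|u(0)|^q`. -/
def Dfun (q : ℝ) (u u' : ℝ → ℝ) : ℝ :=
  (1 / 2) * (∫ x, (u' x) ^ 2) - (1 / q) * |u 0| ^ q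

/-- `F_{p,q}(u) = (1/2)∫ u'² − (1/p)∫ |u|^p − (1/q)|u(0)|^q`. -/
def Ffun (p q : ℝ) (u u' : ℝ → ℝ) : ℝ :=
  (1 / 2) * (∫ x, (u' x) ^ 2) - (1 / p) * (∫ x, |u x| ^ p) - (1 / q) * |u 0| ^ q

/-!
Cut the line at the origin and let `m` be the mass of `u` on one of the two half-lines. With
`κ = 2 / √3`, the function `c(m) = (κ / 8) cot (κ m)` solves the Riccati equation
`c' = -1/6 - 8 c ^ 2`, so that with `m(x)` the mass of `u` to the right of `x`,
`(c(m(x)) u ^ 4)' = (u' + 4 c(m(x)) u ^ 3) ^ 2 / 2 - (u' ^ 2 / 2 - u ^ 6 / 6)`.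
Integrating, the critical energy of a half-line is at least `c(m) u(0) ^ 4`.
Strict midpoint convexity of the cotangent makes the even splitting of the mass optimal, whence
`F(u) ≥ 2 c(μ / 2) |u(0)| ^ 4 - |u(0)| ^ q / q`. For `μ` below the critical mass
`π / κ` the coefficient `c(μ / 2)` is positive, and for `q < 4` the right-hand side has a unique
minimizer `|u(0)| = a > 0`, with a negative minimum. In the equality case `u' = -4 c(m) u ^ 3`
almost everywhere, which makes `u ^ 2 / sin (κ m)` constant and integrates to a soliton
`√(K / cosh (κ K |x| + s))` whose parameters are determined by `μ` and `a`.
-/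

open Filter Topology

section PowerDifference

theorem one_div_sub_one_div_lt_rpow_div_sub_rpow_div {q r τ : ℝ} (hq : 0 < q) (hqr : q < r)
    (hτ : 0 ≤ τ) (hτ1 : τ ≠ 1) : 1 / r - 1 / q < τ ^ r / r - τ ^ q / q := by
  have hr : 0 < r := hq.trans hqr
  have hpow_ne : τ ^ q - 1 ≠ 0 := by
    rw [sub_ne_zero]
    exact fun h => hτ1 ((rpow_left_inj hτ zero_le_one hq.ne').1 (h.trans (one_rpow q).symm))
  have hbernoulli : 1 + r / q * (τ ^ q - 1) < τ ^ r := by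
    have h := one_add_mul_self_lt_rpow_one_add (by linarith [rpow_nonneg hτ q]) hpow_ne
      ((one_lt_div hq).2 hqr)
    rwa [add_sub_cancel, ← rpow_mul hτ, mul_div_cancel₀ r hq.ne'] at h
  calc 1 / r - 1 / q = (1 + r / q * (τ ^ q - 1)) / r - τ ^ q / q := by field_simp; ring
    _ < τ ^ r / r - τ ^ q / q := by gcongr

theorem exists_strict_min_mul_rpow_sub_rpow_div {q r C : ℝ} (hq : 0 < q) (hqr : q < r)
    (hC : 0 < C) :
    ∃ a > 0, C * a ^ r - a ^ q / q < 0 ∧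
      ∀ b, 0 ≤ b → b ≠ a → C * a ^ r - a ^ q / q < C * b ^ r - b ^ q / q := by
  have hr : 0 < r := hq.trans hqr
  obtain ⟨a, ha, hcrit⟩ : ∃ a > 0, C * a ^ r = a ^ q / r := by
    refine ⟨(1 / (r * C)) ^ (1 / (r - q)), by positivity, ?_⟩
    set a := (1 / (r * C)) ^ (1 / (r - q)) with ha_def
    have ha : 0 < a := by positivity
    have hpow : a ^ (r - q) = 1 / (r * C) := by
      rw [ha_def, ← rpow_mul (by positivity), one_div_mul_cancel (sub_pos.2 hqr).ne', rpow_one]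
    rw [rpow_sub ha, div_eq_iff (by positivity)] at hpow
    rw [hpow]
    field_simp
  have hscale (τ : ℝ) (hτ : 0 ≤ τ) :
      C * (a * τ) ^ r - (a * τ) ^ q / q = a ^ q * (τ ^ r / r - τ ^ q / q) := by
    rw [mul_rpow ha.le hτ, mul_rpow ha.le hτ, ← mul_assoc, hcrit]
    ring
  have hmin : C * a ^ r - a ^ q / q = a ^ q * (1 / r - 1 / q) := by simpa using hscale 1 zero_le_one
  refine ⟨a, ha, ?_, fun b hb hba => ?_⟩
  · rw [hmin]
    exact mul_neg_of_pos_of_neg (by positivity) (sub_neg.2 (one_div_lt_one_div_of_lt hq hqr))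
  · rw [hmin, ← mul_div_cancel₀ b ha.ne', hscale _ (by positivity)]
    refine mul_lt_mul_of_pos_left ?_ (by positivity)
    exact one_div_sub_one_div_lt_rpow_div_sub_rpow_div hq hqr (by positivity)
      (fun h => hba ((div_eq_one_iff_eq ha.ne').1 h))

end PowerDifference

section Cotangent

theorem hasDerivAt_cot {x : ℝ} (hx : sin x ≠ 0) : HasDerivAt cot (-(1 + cot x ^ 2)) x := by
  rw [cot_eq_cos_div_sin, show cot = cos / sin from funext cot_eq_cos_div_sin]
  refine ((hasDerivAt_cos x).div (hasDerivAt_sin x) hx).congr_deriv ?_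
  field_simp
  ring

theorem contDiffAt_cot {n : WithTop ℕ∞} {x : ℝ} (hx : sin x ≠ 0) : ContDiffAt ℝ n cot x := by
  rw [show cot = cos / sin from funext cot_eq_cos_div_sin]
  exact contDiff_cos.contDiffAt.div contDiff_sin.contDiffAt hx

theorem arctan_cot {x : ℝ} (h0 : 0 < x) (h1 : x < π) : arctan (cot x) = π / 2 - x := by
  rw [← tan_inv_eq_cot, ← tan_pi_div_two_sub]
  exact arctan_tan (by linarith) (by linarith)

theorem one_add_cot_sq {x : ℝ} (hx : sin x ≠ 0) : 1 + cot x ^ 2 = 1 / sin x ^ 2 := by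
  rw [cot_eq_cos_div_sin]
  field_simp
  exact sin_sq_add_cos_sq x

theorem sqrt_one_add_cot_sq {x : ℝ} (hx : 0 < sin x) : √(1 + cot x ^ 2) = 1 / sin x := by
  rw [one_add_cot_sq hx.ne', ← one_div_pow, sqrt_sq (by positivity)]

theorem cot_add_cot {x y : ℝ} (hx : sin x ≠ 0) (hy : sin y ≠ 0) :
    cot x + cot y = sin (x + y) / (sin x * sin y) := by
  rw [cot_eq_cos_div_sin, cot_eq_cos_div_sin, sin_add]
  field_simp
  ring

theorem sin_mul_sin_eq_sq_sub_sq (x y : ℝ) :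
    sin x * sin y = sin ((x + y) / 2) ^ 2 - sin ((x - y) / 2) ^ 2 := by
  obtain ⟨h, d, rfl, rfl⟩ : ∃ h d, x = h + d ∧ y = h - d :=
    ⟨(x + y) / 2, (x - y) / 2, by ring, by ring⟩
  rw [show (h + d + (h - d)) / 2 = h by ring, show (h + d - (h - d)) / 2 = d by ring, sin_add,
    sin_sub]
  linear_combination sin h ^ 2 * cos_sq' d - sin d ^ 2 * cos_sq' h

theorem two_mul_cot_half_add_lt_cot_add_cot {x y : ℝ} (hx : 0 < x) (hy : 0 < y)
    (hxy : x + y < π) (hne : x ≠ y) : 2 * cot ((x + y) / 2) < cot x + cot y := by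
  have hsin_x : 0 < sin x := sin_pos_of_pos_of_lt_pi hx (by linarith)
  have hsin_y : 0 < sin y := sin_pos_of_pos_of_lt_pi hy (by linarith)
  have hsin_half : 0 < sin ((x + y) / 2) := sin_pos_of_pos_of_lt_pi (by linarith) (by linarith)
  have hsin_add : 0 < sin (x + y) := sin_pos_of_pos_of_lt_pi (by linarith) hxy
  have hsin_diff : sin ((x - y) / 2) ≠ 0 := by
    rw [Ne, sin_eq_zero_iff_of_lt_of_lt (by linarith) (by linarith)]
    exact div_ne_zero (sub_ne_zero.2 hne) two_ne_zero
  calc 2 * cot ((x + y) / 2) = sin (x + y) / sin ((x + y) / 2) ^ 2 := by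
        rw [two_mul, cot_add_cot hsin_half.ne' hsin_half.ne', add_halves, sq]
    _ < sin (x + y) / (sin x * sin y) := by
        refine div_lt_div_of_pos_left hsin_add (by positivity) ?_
        rw [sin_mul_sin_eq_sq_sub_sq]
        exact sub_lt_self _ (by positivity)
    _ = cot x + cot y := (cot_add_cot hsin_x.ne' hsin_y.ne').symm

end Cotangent

/-- The frequency `κ = 2 / √3` of the trigonometric formulas below; the mass of a soliton of the
quintic equation `-u'' - u ^ 5 = -ω u` is `π / κ` for every `ω`. -/
def massFrequency : ℝ := 2 / √3

local notation "κ" => massFrequency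

/-- The mass `(√3 / 2) π = π / κ` of the solitons on the line, below which the critical energy is
bounded from below. -/
def criticalMass : ℝ := √3 / 2 * π

/-- The optimal constant `c(m)` in the half-line inequality `tailEnergy ≥ c(m) * u ^ 4` for tails of
mass `m`. -/
def calibration (m : ℝ) : ℝ := κ / 8 * cot (κ * m)

theorem massFrequency_pos : 0 < κ := by
  unfold massFrequency
  positivity

theorem massFrequency_sq : κ ^ 2 = 4 / 3 := by
  rw [massFrequency, div_pow, sq_sqrt (by norm_num)]
  norm_num

theorem massFrequency_mul_criticalMass : κ * criticalMass = π := by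
  rw [massFrequency, criticalMass]
  field_simp

theorem massFrequency_mul_lt_pi {m : ℝ} (hm : m < criticalMass) : κ * m < π := by
  rw [← massFrequency_mul_criticalMass]
  exact mul_lt_mul_of_pos_left hm massFrequency_pos

theorem sin_massFrequency_mul_pos {m : ℝ} (h0 : 0 < m) (h1 : m < criticalMass) :
    0 < sin (κ * m) :=
  sin_pos_of_pos_of_lt_pi (mul_pos massFrequency_pos h0) (massFrequency_mul_lt_pi h1)

theorem hasDerivAt_calibration {m : ℝ} (h0 : 0 < m) (h1 : m < criticalMass) :
    HasDerivAt calibration (-1 / 6 - 8 * calibration m ^ 2) m := by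
  have hcot := hasDerivAt_cot (sin_massFrequency_mul_pos h0 h1).ne'
  refine ((hcot.comp m ((hasDerivAt_id m).const_mul κ)).const_mul (κ / 8)).congr_deriv ?_
  rw [calibration]
  linear_combination (-1 / 8) * massFrequency_sq

theorem contDiffAt_calibration {n : WithTop ℕ∞} {m : ℝ} (h0 : 0 < m) (h1 : m < criticalMass) :
    ContDiffAt ℝ n calibration m :=
  contDiffAt_const.mul ((contDiffAt_cot (sin_massFrequency_mul_pos h0 h1).ne').comp m
    (contDiffAt_const.mul contDiffAt_id))

theorem calibration_pos {m : ℝ} (h0 : 0 < m) (h1 : m < criticalMass / 2) : 0 < calibration m := by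
  have hlt : κ * m < π / 2 := by
    rw [← massFrequency_mul_criticalMass, mul_div_assoc]
    exact mul_lt_mul_of_pos_left h1 massFrequency_pos
  have harg : 0 < κ * m := mul_pos massFrequency_pos h0
  rw [calibration, ← tan_inv_eq_cot]
  exact mul_pos (by linarith [massFrequency_pos])
    (inv_pos.2 (tan_pos_of_pos_of_lt_pi_div_two harg hlt))

theorem two_mul_calibration_half_lt {m n : ℝ} (hm : 0 < m) (hn : 0 < n)
    (hmn : m + n < criticalMass) (hne : m ≠ n) :
    2 * calibration ((m + n) / 2) < calibration m + calibration n := by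
  have hκ := massFrequency_pos
  have hcot := two_mul_cot_half_add_lt_cot_add_cot (mul_pos hκ hm) (mul_pos hκ hn)
    (by rw [← mul_add]; exact massFrequency_mul_lt_pi hmn) (mul_right_injective₀ hκ.ne' |>.ne hne)
  calc 2 * calibration ((m + n) / 2) = κ / 8 * (2 * cot ((κ * m + κ * n) / 2)) := by
        rw [calibration, ← mul_add, mul_div_assoc]; ring
    _ < κ / 8 * (cot (κ * m) + cot (κ * n)) := by gcongr
    _ = calibration m + calibration n := mul_add _ _ _

section AbsolutelyContinuous

variable {f f' : ℝ → ℝ} {a b : ℝ}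

theorem ae_restrict_uIoc_deriv_eq (hf' : ∀ᵐ x, x ∈ uIcc a b → HasDerivAt f (f' x) x) :
    deriv f =ᵐ[volume.restrict (uIoc a b)] f' := by
  filter_upwards [ae_restrict_of_ae hf', ae_restrict_mem measurableSet_uIoc] with x hx hxI
  exact (hx (uIoc_subset_uIcc hxI)).deriv

theorem intervalIntegrable_of_ae_hasDerivAt (hf : AbsolutelyContinuousOnInterval f a b)
    (hf' : ∀ᵐ x, x ∈ uIcc a b → HasDerivAt f (f' x) x) : IntervalIntegrable f' volume a b :=
  hf.intervalIntegrable_deriv.congr_ae (ae_restrict_uIoc_deriv_eq hf')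

theorem integral_eq_sub_of_ae_hasDerivAt (hf : AbsolutelyContinuousOnInterval f a b)
    (hf' : ∀ᵐ x, x ∈ uIcc a b → HasDerivAt f (f' x) x) : ∫ x in a..b, f' x = f b - f a := by
  rw [← hf.integral_deriv_eq_sub]
  exact intervalIntegral.integral_congr_ae_restrict (ae_restrict_uIoc_deriv_eq hf').symm

theorem absolutelyContinuousOnInterval_pow (hf : AbsolutelyContinuousOnInterval f a b) (n : ℕ) :
    AbsolutelyContinuousOnInterval (fun x => f x ^ n) a b := by
  induction n with
  | zero =>
    simpa only [pow_zero] using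
      (LipschitzWith.const (1 : ℝ)).lipschitzOnWith.absolutelyContinuousOnInterval
  | succ n ih => simpa only [pow_succ] using ih.fun_mul hf

theorem tendsto_zero_atTop_of_integrable_of_tendsto {L : ℝ} (hf : Integrable f)
    (hL : Tendsto f atTop (𝓝 L)) : Tendsto f atTop (𝓝 0) := by
  have hvolume : ∀ s ∈ (atTop : Filter ℝ), volume s = ⊤ := by
    intro s hs
    obtain ⟨c, hc⟩ := mem_atTop_sets.1 hs
    exact measure_mono_top hc volume_Ici
  rwa [IntegrableAtFilter.eq_zero_of_tendsto (hf.integrableAtFilter _) hvolume hL] at hL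

end AbsolutelyContinuous

/-- The pair `(u, u')` is in `H¹(ℝ)` and `u'` is locally integrable, so that `u` is absolutely
continuous with derivative `u'`. -/
structure AbsContH1 (u u' : ℝ → ℝ) : Prop where
  isH1 : IsH1 u u'
  intervalIntegrable_deriv : ∀ a b, IntervalIntegrable u' volume a b

-- Where `u'` is not integrable, the interval integral in `IsH1` is `0` by convention. Then `u` is
-- constant near `+∞`, with the value it takes at any given point, and square-integrability
-- forces `u = 0`.
theorem IsH1.eq_zero_of_not_intervalIntegrable {u u' : ℝ → ℝ} {a b : ℝ} (h : IsH1 u u')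
    (hab : ¬ IntervalIntegrable u' volume a b) (x : ℝ) : u x = 0 := by
  obtain ⟨-, hsq, -, hftc⟩ := h
  have heq {c d : ℝ} (hcd : c ≤ d) (hni : ¬ IntervalIntegrable u' volume c d) : u d = u c := by
    rw [← sub_eq_zero, hftc c d hcd, intervalIntegral.integral_undef hni]
  have hfar : ∀ y ≥ max x (max a b), u y = u x := by
    intro y hy
    obtain ⟨hxy, hay, hby⟩ : x ≤ y ∧ a ≤ y ∧ b ≤ y := by simpa only [ge_iff_le, max_le_iff] using hy
    set l := min x (min a b) with hl
    obtain ⟨hlx, hla, hlb⟩ : l ≤ x ∧ l ≤ a ∧ l ≤ b := by simpa only [le_min_iff] using hl.le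
    have hly : ¬ IntervalIntegrable u' volume l y := fun hi =>
      hab (hi.mono_set (uIcc_subset_uIcc (mem_uIcc_of_le hla hay) (mem_uIcc_of_le hlb hby)))
    by_cases hxi : IntervalIntegrable u' volume x y
    · rw [heq (hlx.trans hxy) hly, heq hlx fun hi => hly (hi.trans hxi)]
    · exact heq hxy hxi
  have hlim : Tendsto (fun y => u y ^ 2) atTop (𝓝 (u x ^ 2)) :=
    tendsto_const_nhds.congr' <| (eventually_ge_atTop (max x (max a b))).mono fun y hy => by
      simp only [hfar y hy]
  have hzero := tendsto_nhds_unique hlim (tendsto_zero_atTop_of_integrable_of_tendsto hsq hlim)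
  exact pow_eq_zero_iff two_ne_zero |>.1 hzero

theorem IsH1.absContH1 {u u' : ℝ → ℝ} (h : IsH1 u u') (hm : mass u ≠ 0) : AbsContH1 u u' := by
  refine ⟨h, fun a b => ?_⟩
  by_contra hab
  refine hm (integral_eq_zero_of_ae (Eventually.of_forall fun x => ?_))
  simp only [h.eq_zero_of_not_intervalIntegrable hab x, Pi.zero_apply, ne_eq, OfNat.ofNat_ne_zero,
    not_false_eq_true, zero_pow]

namespace AbsContH1

variable {u u' : ℝ → ℝ}

theorem of_lipschitzWith {C : NNReal} (hu : LipschitzWith C u) (hsq : Integrable fun x => u x ^ 2)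
    (hdsq : Integrable fun x => deriv u x ^ 2) : AbsContH1 u (deriv u) := by
  have hac (a b : ℝ) : AbsolutelyContinuousOnInterval u a b :=
    hu.lipschitzOnWith.absolutelyContinuousOnInterval
  exact ⟨⟨hu.continuous, hsq, hdsq, fun a b _ => (hac a b).integral_deriv_eq_sub.symm⟩,
    fun a b => (hac a b).intervalIntegrable_deriv⟩

theorem continuous (h : AbsContH1 u u') : Continuous u := h.isH1.1

theorem integrable_sq (h : AbsContH1 u u') : Integrable fun x => u x ^ 2 := h.isH1.2.1

theorem integrable_deriv_sq (h : AbsContH1 u u') : Integrable fun x => u' x ^ 2 := h.isH1.2.2.1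

theorem integral_deriv (h : AbsContH1 u u') (a b : ℝ) : ∫ t in a..b, u' t = u b - u a := by
  rcases le_total a b with hab | hba
  · exact (h.isH1.2.2.2 a b hab).symm
  · rw [intervalIntegral.integral_symm, ← h.isH1.2.2.2 b a hba, neg_sub]

theorem eq_add_integral (h : AbsContH1 u u') (a : ℝ) : u = fun x => u a + ∫ t in a..x, u' t := by
  funext x
  rw [h.integral_deriv, add_sub_cancel]

theorem locallyIntegrable_deriv (h : AbsContH1 u u') : LocallyIntegrable u' := fun x =>
  ⟨Ioc (x - 1) (x + 1), Ioc_mem_nhds (by linarith) (by linarith),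
    (intervalIntegrable_iff_integrableOn_Ioc_of_le (by linarith)).1
      (h.intervalIntegrable_deriv _ _)⟩

theorem ae_hasDerivAt (h : AbsContH1 u u') : ∀ᵐ x, HasDerivAt u (u' x) x := by
  filter_upwards [LocallyIntegrable.ae_hasDerivAt_integral h.locallyIntegrable_deriv] with x hx
  rw [h.eq_add_integral 0]
  exact (hx 0).const_add (u 0)

theorem absolutelyContinuousOnInterval (h : AbsContH1 u u') (a b : ℝ) :
    AbsolutelyContinuousOnInterval u a b := by
  rw [h.eq_add_integral a]
  exact (LipschitzWith.const (u a)).lipschitzOnWith.absolutelyContinuousOnInterval.fun_add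
    ((h.intervalIntegrable_deriv a b).absolutelyContinuousOnInterval_intervalIntegral left_mem_uIcc)

theorem comp_neg (h : AbsContH1 u u') : AbsContH1 (fun x => u (-x)) (fun x => -u' (-x)) where
  isH1 := by
    refine ⟨h.continuous.comp continuous_neg, h.integrable_sq.comp_neg, ?_, fun a b _ => ?_⟩
    · simpa only [neg_sq] using h.integrable_deriv_sq.comp_neg
    · rw [intervalIntegral.integral_neg, intervalIntegral.integral_comp_neg, h.integral_deriv,
        neg_sub]
  intervalIntegrable_deriv a b := by
    have hab := (IntervalIntegrable.iff_comp_neg (by simp)).1 (h.intervalIntegrable_deriv (-a) (-b))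
    rw [neg_neg, neg_neg] at hab
    exact hab.neg

theorem integrable_mul_deriv (h : AbsContH1 u u') : Integrable fun x => u x * u' x := by
  refine (h.integrable_sq.add h.integrable_deriv_sq).mono'
    (h.continuous.aestronglyMeasurable.mul h.locallyIntegrable_deriv.aestronglyMeasurable)
    (Eventually.of_forall fun x => ?_)
  rw [norm_mul, norm_eq_abs, norm_eq_abs, Pi.add_apply, ← sq_abs (u x), ← sq_abs (u' x)]
  nlinarith only [sq_nonneg (|u x| - |u' x|), sq_nonneg |u x|, sq_nonneg |u' x|]

theorem sq_eq_add_integral (h : AbsContH1 u u') (a x : ℝ) :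
    u x ^ 2 = u a ^ 2 + ∫ t in a..x, 2 * (u t * u' t) := by
  have hderiv : ∀ᵐ t, t ∈ uIcc a x → HasDerivAt (fun s => u s ^ 2) (2 * (u t * u' t)) t := by
    filter_upwards [h.ae_hasDerivAt] with t ht _
    refine (ht.pow 2).congr_deriv ?_
    ring
  rw [integral_eq_sub_of_ae_hasDerivAt
    (absolutelyContinuousOnInterval_pow (h.absolutelyContinuousOnInterval a x) 2) hderiv,
    add_sub_cancel]

theorem tendsto_sq_atTop (h : AbsContH1 u u') : Tendsto (fun x => u x ^ 2) atTop (𝓝 0) := by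
  refine tendsto_zero_atTop_of_integrable_of_tendsto h.integrable_sq
    (L := u 0 ^ 2 + ∫ t in Ioi 0, 2 * (u t * u' t)) ?_
  rw [funext (h.sq_eq_add_integral 0)]
  exact (intervalIntegral_tendsto_integral_Ioi 0 (h.integrable_mul_deriv.const_mul 2).integrableOn
    tendsto_id).const_add _

theorem exists_sq_le (h : AbsContH1 u u') : ∃ C, ∀ x, u x ^ 2 ≤ C := by
  refine ⟨u 0 ^ 2 + ∫ t, ‖2 * (u t * u' t)‖, fun x => ?_⟩
  have hint := h.integrable_mul_deriv.const_mul 2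
  rw [h.sq_eq_add_integral 0]
  gcongr
  calc ∫ t in 0..x, 2 * (u t * u' t) ≤ ‖∫ t in 0..x, 2 * (u t * u' t)‖ := le_norm_self _
    _ ≤ ∫ t in uIoc 0 x, ‖2 * (u t * u' t)‖ := intervalIntegral.norm_integral_le_integral_norm_uIoc
    _ ≤ ∫ t, ‖2 * (u t * u' t)‖ :=
        setIntegral_le_integral hint.norm (Eventually.of_forall fun _ => norm_nonneg _)

theorem integrable_pow_add_two (h : AbsContH1 u u') (n : ℕ) :
    Integrable fun x => u x ^ (n + 2) := by
  obtain ⟨C, hC⟩ := h.exists_sq_le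
  refine (h.integrable_sq.const_mul (√C ^ n)).mono' (h.continuous.pow _).aestronglyMeasurable
    (Eventually.of_forall fun x => ?_)
  calc ‖u x ^ (n + 2)‖ = |u x| ^ n * u x ^ 2 := by
        rw [norm_pow, norm_eq_abs, pow_add, sq_abs]
    _ ≤ √C ^ n * u x ^ 2 := by
        gcongr
        exact abs_le_sqrt (hC x)

end AbsContH1

theorem integral_Ioi_add_integral_Ioi_comp_neg {f : ℝ → ℝ} (hf : Integrable f) :
    (∫ x in Ioi 0, f x) + ∫ x in Ioi 0, f (-x) = ∫ x, f x := by
  rw [integral_comp_neg_Ioi 0 f, neg_zero, add_comm]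
  exact intervalIntegral.integral_Iic_add_Ioi hf.integrableOn hf.integrableOn

section TailMass

/-- The mass `∫_x^∞ u ^ 2` of `u` to the right of `x`; it is the time variable of the calibration
argument on a half-line. -/
def tailMass (u : ℝ → ℝ) (x : ℝ) : ℝ := ∫ t in Ioi x, u t ^ 2

variable {u : ℝ → ℝ}

theorem tailMass_nonneg (u : ℝ → ℝ) (x : ℝ) : 0 ≤ tailMass u x :=
  setIntegral_nonneg measurableSet_Ioi fun _ _ => sq_nonneg _

theorem antitone_tailMass (hu2 : Integrable fun x => u x ^ 2) : Antitone (tailMass u) :=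
  fun _ _ hxy => setIntegral_mono_set hu2.integrableOn (ae_of_all _ fun _ => sq_nonneg _)
    (Ioi_subset_Ioi hxy).eventuallyLE

theorem tendsto_tailMass (u : ℝ → ℝ) : Tendsto (tailMass u) atTop (𝓝 0) :=
  tendsto_integral_Ioi_zero tendsto_id

theorem tailMass_add_tailMass_comp_neg (hu2 : Integrable fun x => u x ^ 2) :
    tailMass u 0 + tailMass (fun x => u (-x)) 0 = mass u :=
  integral_Ioi_add_integral_Ioi_comp_neg hu2

theorem hasDerivAt_tailMass (hu : Continuous u) (hu2 : Integrable fun x => u x ^ 2) (x : ℝ) :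
    HasDerivAt (tailMass u) (-(u x ^ 2)) x := by
  have hsplit : tailMass u = fun y => tailMass u 0 - ∫ t in 0..y, u t ^ 2 := by
    funext y
    rw [eq_sub_iff_add_eq', tailMass, tailMass]
    exact intervalIntegral.integral_interval_add_Ioi hu2.integrableOn hu2.integrableOn
  rw [hsplit]
  exact (((hu.pow 2).integral_hasStrictDerivAt 0 x).hasDerivAt).const_sub _

theorem continuous_tailMass (hu : Continuous u) (hu2 : Integrable fun x => u x ^ 2) :
    Continuous (tailMass u) :=
  continuous_iff_continuousAt.2 fun x => (hasDerivAt_tailMass hu hu2 x).continuousAt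

theorem contDiff_tailMass (hu : Continuous u) (hu2 : Integrable fun x => u x ^ 2) :
    ContDiff ℝ 1 (tailMass u) := by
  rw [contDiff_one_iff_deriv, funext fun x => (hasDerivAt_tailMass hu hu2 x).deriv]
  exact ⟨fun x => (hasDerivAt_tailMass hu hu2 x).differentiableAt, (hu.pow 2).neg⟩

theorem tailMass_pos (hu : Continuous u) (hu2 : Integrable fun x => u x ^ 2) {x : ℝ}
    (hx : u x ≠ 0) : 0 < tailMass u x := by
  refine (tailMass_nonneg u x).lt_of_ne' fun hzero => hx ?_
  have hmin : IsLocalMin (tailMass u) x :=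
    Eventually.of_forall fun y => hzero.trans_le (tailMass_nonneg u y)
  simpa using hmin.hasDerivAt_eq_zero (hasDerivAt_tailMass hu hu2 x)

end TailMass

section Energy

/-- The density `u' ^ 2 / 2 - u ^ 6 / 6` of the critical energy, i.e. of `Ffun 6 q` without its
point interaction. -/
def energyDensity (u u' : ℝ → ℝ) (x : ℝ) : ℝ := 1 / 2 * u' x ^ 2 - 1 / 6 * u x ^ 6

/-- The critical energy of `u` on the half-line `(x, ∞)`. -/
def tailEnergy (u u' : ℝ → ℝ) (x : ℝ) : ℝ := ∫ t in Ioi x, energyDensity u u' t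

variable {u u' : ℝ → ℝ}

theorem AbsContH1.integrable_energyDensity (h : AbsContH1 u u') :
    Integrable (energyDensity u u') :=
  (h.integrable_deriv_sq.const_mul _).sub ((h.integrable_pow_add_two 4).const_mul _)

theorem AbsContH1.integral_energyDensity (h : AbsContH1 u u') {a b : ℝ} :
    ∫ x in a..b, energyDensity u u' x = tailEnergy u u' a - tailEnergy u u' b := by
  rw [eq_sub_iff_add_eq]
  exact intervalIntegral.integral_interval_add_Ioi h.integrable_energyDensity.integrableOn
    h.integrable_energyDensity.integrableOn

theorem AbsContH1.Ffun_six_eq (h : AbsContH1 u u') (q : ℝ) :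
    Ffun 6 q u u' = tailEnergy u u' 0 + tailEnergy (fun x => u (-x)) (fun x => -u' (-x)) 0 -
      1 / q * |u 0| ^ q := by
  have hpow (x : ℝ) : |u x| ^ (6 : ℝ) = u x ^ 6 := by
    rw [← Even.pow_abs (by decide : Even 6), ← rpow_natCast, Nat.cast_ofNat]
  have hneg : energyDensity (fun x => u (-x)) (fun x => -u' (-x)) =
      fun x => energyDensity u u' (-x) := by
    funext x
    simp only [energyDensity, neg_sq]
  rw [tailEnergy, tailEnergy, hneg,
    integral_Ioi_add_integral_Ioi_comp_neg h.integrable_energyDensity, Ffun]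
  simp only [hpow, energyDensity]
  rw [integral_sub (h.integrable_deriv_sq.const_mul _)
    ((h.integrable_pow_add_two 4).const_mul _), integral_const_mul, integral_const_mul]

end Energy

section HalfLineInequality

/-- The defect in the first-order equation `u' = -4 c(m) u ^ 3` satisfied by the half-line
minimizers, `m` being the tail mass shifted by `ε`. A positive shift keeps `m` away from the pole of
`calibration` at `0`. -/
def calibrationDefect (u u' : ℝ → ℝ) (ε x : ℝ) : ℝ :=
  u' x + 4 * calibration (tailMass u x + ε) * u x ^ 3

namespace AbsContH1

variable {u u' : ℝ → ℝ} {a b ε : ℝ}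

theorem tailMass_add_mem_Ioo (h : AbsContH1 u u') (hb : 0 < tailMass u b + ε)
    (ha : tailMass u a + ε < criticalMass) {x : ℝ} (hx : x ∈ Icc a b) :
    0 < tailMass u x + ε ∧ tailMass u x + ε < criticalMass :=
  ⟨hb.trans_le (by gcongr; exact antitone_tailMass h.integrable_sq hx.2),
    lt_of_le_of_lt (by gcongr; exact antitone_tailMass h.integrable_sq hx.1) ha⟩

theorem absolutelyContinuousOnInterval_comp_tailMass_mul_pow (h : AbsContH1 u u') {g : ℝ → ℝ}
    (hg : ∀ x ∈ uIcc a b, ContDiffAt ℝ 1 g (tailMass u x)) (n : ℕ) :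
    AbsolutelyContinuousOnInterval (fun x => g (tailMass u x) * u x ^ n) a b := by
  have htail := contDiff_tailMass h.continuous h.integrable_sq
  have hcomp : ContDiffOn ℝ 1 (fun x => g (tailMass u x)) (uIcc a b) := fun x hx =>
    ((hg x hx).comp x htail.contDiffAt).contDiffWithinAt
  exact hcomp.absolutelyContinuousOnInterval.fun_mul
    (absolutelyContinuousOnInterval_pow (h.absolutelyContinuousOnInterval a b) n)

-- The Riccati equation for `calibration` is what completes the square here.
theorem hasDerivAt_calibration_mul_pow (h : AbsContH1 u u') {x : ℝ} (hu : HasDerivAt u (u' x) x)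
    (h0 : 0 < tailMass u x + ε) (h1 : tailMass u x + ε < criticalMass) :
    HasDerivAt (fun x => calibration (tailMass u x + ε) * u x ^ 4)
      (1 / 2 * calibrationDefect u u' ε x ^ 2 - energyDensity u u' x) x := by
  have hm := (hasDerivAt_tailMass h.continuous h.integrable_sq x).add_const ε
  refine (((hasDerivAt_calibration h0 h1).comp x hm).mul (hu.pow 4)).congr_deriv ?_
  simp only [calibrationDefect, energyDensity, Function.comp_apply, Pi.pow_apply]
  push_cast
  ring

theorem integral_calibrationDefect_sq (h : AbsContH1 u u') (hab : a ≤ b)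
    (hb : 0 < tailMass u b + ε) (ha : tailMass u a + ε < criticalMass) :
    IntervalIntegrable (fun x => 1 / 2 * calibrationDefect u u' ε x ^ 2) volume a b ∧
    ∫ x in a..b, 1 / 2 * calibrationDefect u u' ε x ^ 2 =
      calibration (tailMass u b + ε) * u b ^ 4 - calibration (tailMass u a + ε) * u a ^ 4 +
        (tailEnergy u u' a - tailEnergy u u' b) := by
  have hmem {x : ℝ} (hx : x ∈ uIcc a b) := h.tailMass_add_mem_Ioo hb ha (uIcc_of_le hab ▸ hx)
  have hac : AbsolutelyContinuousOnInterval
      (fun x => calibration (tailMass u x + ε) * u x ^ 4) a b :=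
    h.absolutelyContinuousOnInterval_comp_tailMass_mul_pow (g := fun m => calibration (m + ε))
      (fun x hx => ContDiffAt.comp (g := calibration) (tailMass u x)
        (contDiffAt_calibration (hmem hx).1 (hmem hx).2) (contDiffAt_id.add contDiffAt_const)) 4
  have hderiv := h.ae_hasDerivAt.mono fun x hux (hx : x ∈ uIcc a b) =>
    h.hasDerivAt_calibration_mul_pow hux (hmem hx).1 (hmem hx).2
  have hint := intervalIntegrable_of_ae_hasDerivAt hac hderiv
  have henergy : IntervalIntegrable (energyDensity u u') volume a b :=
    h.integrable_energyDensity.intervalIntegrable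
  rw [funext fun x => (sub_add_cancel (1 / 2 * calibrationDefect u u' ε x ^ 2)
    (energyDensity u u' x)).symm]
  refine ⟨hint.add henergy, ?_⟩
  rw [intervalIntegral.integral_add hint henergy, integral_eq_sub_of_ae_hasDerivAt hac hderiv,
    h.integral_energyDensity]

theorem calibration_add_mul_pow_le_tailEnergy (h : AbsContH1 u u') (hε : 0 < ε)
    (ha : tailMass u a + ε < criticalMass) :
    calibration (tailMass u a + ε) * u a ^ 4 ≤ tailEnergy u u' a := by
  have hpos (x : ℝ) : 0 < tailMass u x + ε := by linarith [tailMass_nonneg u x]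
  have hε_lt : ε < criticalMass := by linarith [tailMass_nonneg u a]
  have hboundary : Tendsto (fun b => calibration (tailMass u b + ε) * u b ^ 4) atTop (𝓝 0) := by
    have hm : Tendsto (fun b => tailMass u b + ε) atTop (𝓝 ε) := by
      simpa only [zero_add] using (tendsto_tailMass u).add_const ε
    have hc : Tendsto (fun b => calibration (tailMass u b + ε)) atTop (𝓝 (calibration ε)) :=
      (hasDerivAt_calibration hε hε_lt).continuousAt.tendsto.comp hm
    have h4 : Tendsto (fun b => u b ^ 4) atTop (𝓝 0) := by
      simpa only [← pow_mul, zero_pow two_ne_zero] using h.tendsto_sq_atTop.pow 2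
    simpa only [mul_zero] using hc.mul h4
  have henergy : Tendsto (tailEnergy u u') atTop (𝓝 0) := tendsto_integral_Ioi_zero tendsto_id
  have hlim := (hboundary.sub henergy).add_const
    (tailEnergy u u' a - calibration (tailMass u a + ε) * u a ^ 4)
  rw [sub_zero, zero_add] at hlim
  refine sub_nonneg.1 (ge_of_tendsto hlim ?_)
  filter_upwards [eventually_ge_atTop a] with b hab
  have hsq := (h.integral_calibrationDefect_sq hab (hpos b) ha).2
  have hnonneg : 0 ≤ ∫ x in a..b, 1 / 2 * calibrationDefect u u' ε x ^ 2 :=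
    intervalIntegral.integral_nonneg hab fun x _ => by positivity
  linarith

theorem calibration_mul_pow_le_tailEnergy (h : AbsContH1 u u') (ha : tailMass u a < criticalMass) :
    calibration (tailMass u a) * u a ^ 4 ≤ tailEnergy u u' a := by
  have hsmall : ∀ᶠ ε in 𝓝[>] 0, calibration (tailMass u a + ε) * u a ^ 4 ≤ tailEnergy u u' a := by
    filter_upwards [Ioo_mem_nhdsGT (sub_pos.2 ha)] with ε hε
    exact h.calibration_add_mul_pow_le_tailEnergy hε.1 (by linarith [hε.2])
  by_cases hu : u a = 0
  · obtain ⟨ε, hε⟩ := hsmall.exists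
    simpa only [hu, ne_eq, OfNat.ofNat_ne_zero, not_false_eq_true, zero_pow, mul_zero] using hε
  · have hm := tailMass_pos h.continuous h.integrable_sq hu
    have hshift : Tendsto (fun ε => tailMass u a + ε) (𝓝[>] 0) (𝓝 (tailMass u a)) := by
      refine tendsto_nhdsWithin_of_tendsto_nhds (Continuous.tendsto' ?_ 0 _ (add_zero _))
      fun_prop
    have hcont := (hasDerivAt_calibration hm ha).continuousAt.tendsto.comp hshift
    exact le_of_tendsto (hcont.mul_const _) hsmall

end AbsContH1

end HalfLineInequality

section Soliton

/-- The shifted soliton profile with peak mass density `K`; the equality case of the half-line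
inequality is `u = ±halfSoliton K s`. -/
def halfSoliton (K s x : ℝ) : ℝ := √(K / cosh (κ * K * x + s))

/-- The mass of `halfSoliton K s` to the right of `x`. -/
def halfSolitonMass (K s x : ℝ) : ℝ := (π / 2 - arctan (sinh (κ * K * x + s))) / κ

/-- The critical energy of `halfSoliton K s` to the right of `x`. -/
def halfSolitonEnergy (K s x : ℝ) : ℝ :=
  κ * K ^ 2 / 8 * (sinh (κ * K * x + s) / cosh (κ * K * x + s) ^ 2)

/-- The even function equal to `halfSoliton K s` on the positive half-line: a soliton with a corner
at the origin, where the point interaction acts. -/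
def soliton (K s x : ℝ) : ℝ := halfSoliton K s |x|

variable {K : ℝ}

theorem halfSoliton_nonneg (K s x : ℝ) : 0 ≤ halfSoliton K s x :=
  sqrt_nonneg _

theorem halfSoliton_sq (hK : 0 ≤ K) (s x : ℝ) :
    halfSoliton K s x ^ 2 = K / cosh (κ * K * x + s) :=
  sq_sqrt (div_nonneg hK (cosh_pos _).le)

theorem hasDerivAt_mul_add_const (c d x : ℝ) : HasDerivAt (fun x => c * x + d) c x := by
  simpa only [id, mul_one] using ((hasDerivAt_id x).const_mul c).add_const d

theorem hasDerivAt_halfSolitonMass (K s x : ℝ) :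
    HasDerivAt (halfSolitonMass K s) (-(K / cosh (κ * K * x + s))) x := by
  have hinner := (hasDerivAt_mul_add_const (κ * K) s x).sinh.arctan
  refine ((hinner.const_sub (π / 2)).div_const κ).congr_deriv ?_
  rw [← cosh_sq']
  have hκ := massFrequency_pos.ne'
  have hcosh := (cosh_pos (κ * K * x + s)).ne'
  field_simp

theorem halfSolitonMass_pos (K s x : ℝ) : 0 < halfSolitonMass K s x :=
  div_pos (sub_pos.2 (arctan_lt_pi_div_two _)) massFrequency_pos

theorem antitone_halfSolitonMass (hK : 0 ≤ K) (s : ℝ) : Antitone (halfSolitonMass K s) :=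
  antitone_of_hasDerivAt_nonpos (fun x => hasDerivAt_halfSolitonMass K s x)
    fun _ => neg_nonpos.2 (div_nonneg hK (cosh_pos _).le)

theorem sin_massFrequency_mul_halfSolitonMass (K s x : ℝ) :
    sin (κ * halfSolitonMass K s x) = 1 / cosh (κ * K * x + s) := by
  rw [halfSolitonMass, mul_div_cancel₀ _ massFrequency_pos.ne', sin_pi_div_two_sub, cos_arctan,
    ← cosh_sq', sqrt_sq (cosh_pos _).le]

theorem eq_halfSolitonMass_of_arsinh_cot_eq {m s x : ℝ} (h0 : 0 < m) (h1 : m < criticalMass)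
    (h : arsinh (cot (κ * m)) = κ * K * x + s) :
    m = halfSolitonMass K s x := by
  rw [halfSolitonMass, ← h, sinh_arsinh,
    arctan_cot (mul_pos massFrequency_pos h0) (massFrequency_mul_lt_pi h1), sub_sub_cancel,
    mul_div_cancel_left₀ _ massFrequency_pos.ne']

theorem tendsto_halfSolitonMass (hK : 0 < K) (s : ℝ) :
    Tendsto (halfSolitonMass K s) atTop (𝓝 0) := by
  have hlin : Tendsto (fun x => κ * K * x + s) atTop atTop :=
    tendsto_atTop_add_const_right _ s (tendsto_id.const_mul_atTop (mul_pos massFrequency_pos hK))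
  have harctan : Tendsto (fun x => arctan (sinh (κ * K * x + s))) atTop (𝓝 (π / 2)) :=
    (tendsto_arctan_atTop.mono_right nhdsWithin_le_nhds).comp
      (sinhOrderIso.tendsto_atTop.comp hlin)
  have hlim := (harctan.const_sub (π / 2)).div_const κ
  rw [sub_self, zero_div] at hlim
  exact hlim

theorem integrableOn_halfSoliton_sq (hK : 0 < K) (s : ℝ) :
    IntegrableOn (fun x => halfSoliton K s x ^ 2) (Ioi 0) ∧
      ∫ x in Ioi 0, halfSoliton K s x ^ 2 = halfSolitonMass K s 0 := by
  simp only [halfSoliton_sq hK.le]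
  have hderiv : ∀ x ∈ Ici (0 : ℝ), HasDerivAt (fun x => -halfSolitonMass K s x)
      (K / cosh (κ * K * x + s)) x := fun x _ =>
    (hasDerivAt_halfSolitonMass K s x).fun_neg.congr_deriv (neg_neg _)
  have hnonneg : ∀ x ∈ Ioi (0 : ℝ), 0 ≤ K / cosh (κ * K * x + s) := fun x _ =>
    div_nonneg hK.le (cosh_pos _).le
  have hlim := (tendsto_halfSolitonMass hK s).neg
  refine ⟨integrableOn_Ioi_deriv_of_nonneg' hderiv hnonneg hlim, ?_⟩
  rw [integral_Ioi_of_hasDerivAt_of_nonneg' hderiv hnonneg hlim, neg_zero, zero_sub, neg_neg]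

theorem hasDerivAt_halfSoliton (hK : 0 < K) (s x : ℝ) :
    HasDerivAt (halfSoliton K s)
      (-(κ * K / 2) * tanh (κ * K * x + s) * halfSoliton K s x) x := by
  have hcosh := cosh_pos (κ * K * x + s)
  have hquot := ((hasDerivAt_mul_add_const (κ * K) s x).cosh.fun_inv hcosh.ne').const_mul K
  have hpos : 0 < K / cosh (κ * K * x + s) := div_pos hK hcosh
  refine (hquot.sqrt hpos.ne').congr_deriv ?_
  rw [← div_eq_mul_inv, halfSoliton, tanh_eq_sinh_div_cosh,
    div_eq_iff (mul_pos two_pos (sqrt_pos.2 hpos)).ne']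
  have hsq := sq_sqrt hpos.le
  linear_combination κ * K * (sinh (κ * K * x + s) / cosh (κ * K * x + s)) * hsq

theorem abs_deriv_halfSoliton_le (hK : 0 < K) (s x : ℝ) :
    |deriv (halfSoliton K s) x| ≤ κ * K / 2 * halfSoliton K s x := by
  have hκK : 0 < κ * K / 2 := half_pos (mul_pos massFrequency_pos hK)
  rw [(hasDerivAt_halfSoliton hK s x).deriv, abs_mul, abs_mul, abs_neg, abs_of_pos hκK,
    abs_of_nonneg (halfSoliton_nonneg K s x)]
  gcongr
  · exact halfSoliton_nonneg K s x
  · exact mul_le_of_le_one_right hκK.le (abs_tanh_lt_one _).le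

theorem exists_lipschitzWith_halfSoliton (hK : 0 < K) (s : ℝ) :
    ∃ C, LipschitzWith C (halfSoliton K s) := by
  refine ⟨(κ * K / 2 * √K).toNNReal, lipschitzWith_of_nnnorm_deriv_le
    (fun x => (hasDerivAt_halfSoliton hK s x).differentiableAt) fun x => ?_⟩
  refine NNReal.le_toNNReal_of_coe_le ((abs_deriv_halfSoliton_le hK s x).trans ?_)
  have hκK : 0 ≤ κ * K / 2 := (half_pos (mul_pos massFrequency_pos hK)).le
  gcongr
  exact sqrt_le_sqrt (div_le_self hK.le (one_le_cosh _))

theorem integrable_comp_abs {f : ℝ → ℝ} (hf : IntegrableOn f (Ioi 0)) :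
    Integrable fun x => f |x| := by
  have h := (integrable_fun_norm_addHaar (E := ℝ) volume (f := f)).2
    (by simpa only [Module.finrank_self, tsub_self, pow_zero, one_smul] using hf)
  simpa only [norm_eq_abs] using h

theorem deriv_soliton_sq {x : ℝ} (hK : 0 < K) (s : ℝ) (hx : x ≠ 0) :
    deriv (soliton K s) x ^ 2 = deriv (halfSoliton K s) |x| ^ 2 := by
  have hφ := (hasDerivAt_halfSoliton hK s |x|).differentiableAt.hasDerivAt
  change deriv (halfSoliton K s ∘ abs) x ^ 2 = _
  rcases hx.lt_or_gt with hneg | hpos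
  · rw [(hφ.comp x (hasDerivAt_abs_neg hneg)).deriv, mul_neg_one, neg_sq]
  · rw [(hφ.comp x (hasDerivAt_abs_pos hpos)).deriv, mul_one]

theorem integrable_soliton_sq (hK : 0 < K) (s : ℝ) : Integrable fun x => soliton K s x ^ 2 :=
  integrable_comp_abs (f := fun x => halfSoliton K s x ^ 2) (integrableOn_halfSoliton_sq hK s).1

theorem absContH1_soliton (hK : 0 < K) (s : ℝ) :
    AbsContH1 (soliton K s) (deriv (soliton K s)) := by
  obtain ⟨C, hC⟩ := exists_lipschitzWith_halfSoliton hK s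
  refine .of_lipschitzWith (hC.comp (lipschitzWith_one_norm (E := ℝ)))
    (integrable_soliton_sq hK s) ?_
  refine ((integrable_soliton_sq hK s).const_mul ((κ * K / 2) ^ 2)).mono'
    ((measurable_deriv _).pow_const 2).aestronglyMeasurable ?_
  filter_upwards [compl_mem_ae_iff.2 (measure_singleton (0 : ℝ))] with x hx
  rw [norm_of_nonneg (sq_nonneg _), deriv_soliton_sq hK s hx, ← sq_abs, ← mul_pow]
  exact pow_le_pow_left₀ (abs_nonneg _) (abs_deriv_halfSoliton_le hK s |x|) 2

theorem mass_soliton (hK : 0 < K) (s : ℝ) : mass (soliton K s) = 2 * halfSolitonMass K s 0 := by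
  rw [← (integrableOn_halfSoliton_sq hK s).2]
  exact integral_comp_abs (f := fun x => halfSoliton K s x ^ 2)

theorem hasDerivAt_halfSolitonEnergy (hK : 0 < K) (s x : ℝ) :
    HasDerivAt (halfSolitonEnergy K s)
      (-energyDensity (halfSoliton K s) (deriv (halfSoliton K s)) x) x := by
  have hlin := hasDerivAt_mul_add_const (κ * K) s x
  have hcosh := cosh_pos (κ * K * x + s)
  refine ((hlin.sinh.fun_div (hlin.cosh.fun_pow 2) (pow_pos hcosh 2).ne').const_mul
    (κ * K ^ 2 / 8)).congr_deriv ?_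
  have hsix : halfSoliton K s x ^ 6 = (K / cosh (κ * K * x + s)) ^ 3 := by
    rw [← halfSoliton_sq hK.le, ← pow_mul]
  rw [energyDensity, (hasDerivAt_halfSoliton hK s x).deriv, mul_pow, halfSoliton_sq hK.le, hsix,
    tanh_eq_sinh_div_cosh]
  have hsub := cosh_sq (κ * K * x + s)
  field_simp
  norm_num only
  linear_combination
    48 * cosh (κ * K * x + s) * (cosh (κ * K * x + s) ^ 2 - sinh (κ * K * x + s) ^ 2) *
      massFrequency_sq + 64 * cosh (κ * K * x + s) * hsub

theorem tendsto_halfSolitonEnergy (hK : 0 < K) (s : ℝ) :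
    Tendsto (halfSolitonEnergy K s) atTop (𝓝 0) := by
  have hsin : Tendsto (fun x => sin (κ * halfSolitonMass K s x)) atTop (𝓝 0) := by
    have h := (continuous_sin.tendsto _).comp ((tendsto_halfSolitonMass hK s).const_mul κ)
    rwa [mul_zero, sin_zero] at h
  have htanh : IsBoundedUnder (· ≤ ·) atTop fun x => ‖tanh (κ * K * x + s)‖ :=
    isBoundedUnder_of ⟨1, fun x => (abs_tanh_lt_one _).le⟩
  have hlim := (hsin.zero_mul_isBoundedUnder_le htanh).const_mul (κ * K ^ 2 / 8)
  rw [mul_zero] at hlim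
  refine hlim.congr fun x => ?_
  rw [halfSolitonEnergy, sin_massFrequency_mul_halfSolitonMass, tanh_eq_sinh_div_cosh,
    div_mul_div_comm, one_mul, ← sq]

theorem tailEnergy_soliton (hK : 0 < K) (s : ℝ) :
    tailEnergy (soliton K s) (deriv (soliton K s)) 0 = halfSolitonEnergy K s 0 := by
  have hdensity : EqOn (energyDensity (soliton K s) (deriv (soliton K s)))
      (energyDensity (halfSoliton K s) (deriv (halfSoliton K s))) (Ioi 0) := fun x hx => by
    rw [energyDensity, energyDensity, deriv_soliton_sq hK s (ne_of_gt hx), soliton,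
      abs_of_pos hx]
  have hint := (absContH1_soliton hK s).integrable_energyDensity.integrableOn (s := Ioi 0)
  have hderiv (x : ℝ) : HasDerivAt (fun x => -halfSolitonEnergy K s x)
      (energyDensity (halfSoliton K s) (deriv (halfSoliton K s)) x) x :=
    (hasDerivAt_halfSolitonEnergy hK s x).fun_neg.congr_deriv (neg_neg _)
  rw [tailEnergy, setIntegral_congr_fun measurableSet_Ioi hdensity,
    integral_Ioi_of_hasDerivAt_of_tendsto' (fun x _ => hderiv x)
      (hint.congr_fun hdensity measurableSet_Ioi) (tendsto_halfSolitonEnergy hK s).neg,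
    neg_zero, zero_sub, neg_neg]

theorem Ffun_soliton (hK : 0 < K) (s q : ℝ) :
    Ffun 6 q (soliton K s) (deriv (soliton K s)) =
      2 * halfSolitonEnergy K s 0 - 1 / q * |soliton K s 0| ^ q := by
  have heven : (fun x => soliton K s (-x)) = soliton K s := by
    funext x
    rw [soliton, abs_neg, soliton]
  have hderiv : (fun x => -deriv (soliton K s) (-x)) = deriv (soliton K s) := by
    funext x
    rw [← deriv_comp_neg, heven]
  rw [(absContH1_soliton hK s).Ffun_six_eq, heven, hderiv, tailEnergy_soliton hK, two_mul]

end Soliton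

section SolitonOfHalfMass

/-- The even soliton with a corner at the origin that has mass `m` on each half-line and the value
`b > 0` at the origin. -/
def solitonOfHalfMass (m b : ℝ) : ℝ → ℝ :=
  soliton (b ^ 2 / sin (κ * m)) (arsinh (cot (κ * m)))

/-- The minimum of `Ffun 6 q` over the functions of mass `μ` with the value `±b` at the origin. -/
def reducedEnergy (q μ b : ℝ) : ℝ := 2 * calibration (μ / 2) * b ^ 4 - 1 / q * b ^ q

variable {m b : ℝ}

theorem cosh_arsinh_cot (hm : 0 < m) (hm' : m < criticalMass) :
    cosh (arsinh (cot (κ * m))) = 1 / sin (κ * m) := by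
  rw [cosh_arsinh, sqrt_one_add_cot_sq (sin_massFrequency_mul_pos hm hm')]

theorem absContH1_solitonOfHalfMass (hm : 0 < m) (hm' : m < criticalMass) (hb : 0 < b) :
    AbsContH1 (solitonOfHalfMass m b) (deriv (solitonOfHalfMass m b)) :=
  absContH1_soliton (div_pos (pow_pos hb 2) (sin_massFrequency_mul_pos hm hm')) _

theorem mass_solitonOfHalfMass (hm : 0 < m) (hm' : m < criticalMass) (hb : 0 < b) :
    mass (solitonOfHalfMass m b) = 2 * m := by
  rw [solitonOfHalfMass, mass_soliton (div_pos (pow_pos hb 2) (sin_massFrequency_mul_pos hm hm')),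
    ← eq_halfSolitonMass_of_arsinh_cot_eq hm hm' (by rw [mul_zero, zero_add])]

theorem solitonOfHalfMass_zero (hm : 0 < m) (hm' : m < criticalMass) (hb : 0 < b) :
    solitonOfHalfMass m b 0 = b := by
  have hsin := (sin_massFrequency_mul_pos hm hm').ne'
  rw [solitonOfHalfMass, soliton, halfSoliton, abs_zero, mul_zero, zero_add,
    cosh_arsinh_cot hm hm', div_div_div_cancel_right₀ hsin, div_one, sqrt_sq hb.le]

theorem Ffun_solitonOfHalfMass (q : ℝ) (hm : 0 < m) (hm' : m < criticalMass) (hb : 0 < b) :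
    Ffun 6 q (solitonOfHalfMass m b) (deriv (solitonOfHalfMass m b)) =
      reducedEnergy q (2 * m) b := by
  have hsin := sin_massFrequency_mul_pos hm hm'
  have hvalue := solitonOfHalfMass_zero hm hm' hb
  rw [solitonOfHalfMass] at hvalue ⊢
  rw [Ffun_soliton (div_pos (pow_pos hb 2) hsin), hvalue, abs_of_pos hb,
    halfSolitonEnergy, mul_zero, zero_add, cosh_arsinh_cot hm hm', sinh_arsinh, reducedEnergy,
    calibration, mul_div_cancel_left₀ m two_ne_zero]
  have hsin' := hsin.ne'
  field_simp

end SolitonOfHalfMass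

section HalfLineEquality

namespace AbsContH1

variable {u u' : ℝ → ℝ} {a b : ℝ}

theorem ae_calibrationDefect_eq_zero (h : AbsContH1 u u') (hcrit : tailMass u a < criticalMass)
    (hle : tailEnergy u u' a ≤ calibration (tailMass u a) * u a ^ 4) (hab : a ≤ b)
    (hb : 0 < tailMass u b) :
    ∀ᵐ x, x ∈ uIcc a b → calibrationDefect u u' 0 x = 0 := by
  obtain ⟨hint, heq⟩ := h.integral_calibrationDefect_sq (ε := 0) hab (by rwa [add_zero])
    (by rwa [add_zero])
  have htail := h.calibration_mul_pow_le_tailEnergy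
    ((antitone_tailMass h.integrable_sq hab).trans_lt hcrit)
  rw [add_zero, add_zero] at heq
  have hnonneg (x : ℝ) : 0 ≤ 1 / 2 * calibrationDefect u u' 0 x ^ 2 := by positivity
  have hzero : ∫ x in a..b, 1 / 2 * calibrationDefect u u' 0 x ^ 2 = 0 :=
    le_antisymm (by linarith) (intervalIntegral.integral_nonneg hab fun x _ => hnonneg x)
  rw [intervalIntegral.integral_eq_zero_iff_of_le_of_nonneg_ae hab (ae_of_all _ hnonneg) hint,
    Measure.restrict_congr_set Ioc_ae_eq_Icc, EventuallyEq,
    ae_restrict_iff' measurableSet_Icc] at hzero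
  rw [uIcc_of_le hab]
  filter_upwards [hzero] with x hx hxab
  simpa using hx hxab

theorem hasDerivAt_sq_div_sin (h : AbsContH1 u u') {x : ℝ} (hu : HasDerivAt u (u' x) x)
    (hsin : sin (κ * tailMass u x) ≠ 0) (hdefect : calibrationDefect u u' 0 x = 0) :
    HasDerivAt (fun x => (sin (κ * tailMass u x))⁻¹ * u x ^ 2) 0 x := by
  have hm := hasDerivAt_tailMass h.continuous h.integrable_sq x
  refine (((hm.const_mul κ).sin.fun_inv hsin).mul (hu.fun_pow 2)).congr_deriv ?_
  rw [calibrationDefect, calibration, add_zero, cot_eq_cos_div_sin] at hdefect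
  rw [eq_neg_of_add_eq_zero_left hdefect]
  field_simp
  norm_num only
  ring

theorem sq_div_sin_eq (h : AbsContH1 u u') (hcrit : tailMass u a < criticalMass)
    (hle : tailEnergy u u' a ≤ calibration (tailMass u a) * u a ^ 4) (hab : a ≤ b)
    (hb : 0 < tailMass u b) :
    u b ^ 2 / sin (κ * tailMass u b) = u a ^ 2 / sin (κ * tailMass u a) := by
  have hsin {x : ℝ} (hx : x ∈ uIcc a b) : sin (κ * tailMass u x) ≠ 0 := by
    have hmem := h.tailMass_add_mem_Ioo (ε := 0) (by rwa [add_zero]) (by rwa [add_zero])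
      (uIcc_of_le hab ▸ hx)
    rw [add_zero] at hmem
    exact (sin_massFrequency_mul_pos hmem.1 hmem.2).ne'
  have hac := h.absolutelyContinuousOnInterval_comp_tailMass_mul_pow
    (g := fun m => (sin (κ * m))⁻¹)
    (fun x hx => ((contDiffAt_const.mul contDiffAt_id).sin).inv (hsin hx)) 2
  have hderiv : ∀ᵐ x, x ∈ uIcc a b →
      HasDerivAt (fun x => (sin (κ * tailMass u x))⁻¹ * u x ^ 2) 0 x := by
    filter_upwards [h.ae_hasDerivAt, h.ae_calibrationDefect_eq_zero hcrit hle hab hb]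
      with x hu hdefect hx
    exact h.hasDerivAt_sq_div_sin hu (hsin hx) (hdefect hx)
  have heq := integral_eq_sub_of_ae_hasDerivAt hac hderiv
  rw [intervalIntegral.integral_zero, eq_comm, sub_eq_zero] at heq
  simpa only [div_eq_inv_mul] using heq

theorem hasDerivAt_arsinh_cot_tailMass (h : AbsContH1 u u') {x : ℝ} (h0 : 0 < tailMass u x)
    (h1 : tailMass u x < criticalMass) :
    HasDerivAt (fun x => arsinh (cot (κ * tailMass u x)))
      (κ * (u x ^ 2 / sin (κ * tailMass u x))) x := by
  have hsin := sin_massFrequency_mul_pos h0 h1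
  have hm := (hasDerivAt_tailMass h.continuous h.integrable_sq x).const_mul κ
  refine ((hasDerivAt_cot hsin.ne').comp x hm).arsinh.congr_deriv ?_
  rw [Function.comp_apply, sqrt_one_add_cot_sq hsin, one_add_cot_sq hsin.ne', smul_eq_mul]
  have hsin_ne := hsin.ne'
  field_simp

theorem arsinh_cot_tailMass_eq (h : AbsContH1 u u') (hcrit : tailMass u a < criticalMass)
    (hle : tailEnergy u u' a ≤ calibration (tailMass u a) * u a ^ 4) (hab : a ≤ b)
    (hb : 0 < tailMass u b) :
    arsinh (cot (κ * tailMass u b)) =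
      κ * (u a ^ 2 / sin (κ * tailMass u a)) * (b - a) + arsinh (cot (κ * tailMass u a)) := by
  have hderiv : ∀ x ∈ uIcc a b, HasDerivAt (fun x => arsinh (cot (κ * tailMass u x)))
      (κ * (u a ^ 2 / sin (κ * tailMass u a))) x := fun x hx => by
    rw [uIcc_of_le hab] at hx
    have hanti := antitone_tailMass h.integrable_sq
    have hpos := hb.trans_le (hanti hx.2)
    rw [← h.sq_div_sin_eq hcrit hle hx.1 hpos]
    exact h.hasDerivAt_arsinh_cot_tailMass hpos ((hanti hx.1).trans_lt hcrit)
  have hint := intervalIntegral.integral_eq_sub_of_hasDerivAt hderiv intervalIntegrable_const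
  rw [intervalIntegral.integral_const, smul_eq_mul] at hint
  linarith

theorem tailMass_eq_halfSolitonMass (h : AbsContH1 u u') (hcrit : tailMass u 0 < criticalMass)
    (hle : tailEnergy u u' 0 ≤ calibration (tailMass u 0) * u 0 ^ 4) {x : ℝ} (hx : 0 ≤ x)
    (hm : 0 < tailMass u x) :
    tailMass u x = halfSolitonMass (u 0 ^ 2 / sin (κ * tailMass u 0))
      (arsinh (cot (κ * tailMass u 0))) x := by
  refine eq_halfSolitonMass_of_arsinh_cot_eq hm
    ((antitone_tailMass h.integrable_sq hx).trans_lt hcrit) ?_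
  rw [h.arsinh_cot_tailMass_eq hcrit hle hx hm, sub_zero]

-- As long as it is positive, `tailMass u` agrees with a decreasing function that is positive
-- everywhere, so by continuity it never reaches `0`.
theorem tailMass_pos_of_tailEnergy_le (h : AbsContH1 u u') (hcrit : tailMass u 0 < criticalMass)
    (hle : tailEnergy u u' 0 ≤ calibration (tailMass u 0) * u 0 ^ 4) (hm : 0 < tailMass u 0)
    {x : ℝ} (hx : 0 ≤ x) : 0 < tailMass u x := by
  refine (tailMass_nonneg u x).lt_of_ne' fun hzero => ?_
  set K := u 0 ^ 2 / sin (κ * tailMass u 0)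
  set s := arsinh (cot (κ * tailMass u 0))
  have hK : 0 ≤ K := div_nonneg (sq_nonneg _) (sin_massFrequency_mul_pos hm hcrit).le
  have hM := halfSolitonMass_pos K s x
  have hmem : halfSolitonMass K s x / 2 ∈ Icc (tailMass u x) (tailMass u 0) := by
    rw [hzero, h.tailMass_eq_halfSolitonMass hcrit hle le_rfl hm]
    exact ⟨by positivity, (half_le_self hM.le).trans (antitone_halfSolitonMass hK s hx)⟩
  obtain ⟨y, hy, hval⟩ := intermediate_value_Icc' hx
    (continuous_tailMass h.continuous h.integrable_sq).continuousOn hmem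
  have hyM := h.tailMass_eq_halfSolitonMass hcrit hle hy.1 (hval ▸ half_pos hM)
  have := antitone_halfSolitonMass hK s hy.2
  linarith

theorem sq_eq_solitonOfHalfMass_sq (h : AbsContH1 u u') (hcrit : tailMass u 0 < criticalMass)
    (hle : tailEnergy u u' 0 ≤ calibration (tailMass u 0) * u 0 ^ 4) (hu0 : u 0 ≠ 0)
    {x : ℝ} (hx : 0 ≤ x) : u x ^ 2 = solitonOfHalfMass (tailMass u 0) (u 0) x ^ 2 := by
  have hm := tailMass_pos h.continuous h.integrable_sq hu0
  have hmx := h.tailMass_pos_of_tailEnergy_le hcrit hle hm hx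
  have hsin := sin_massFrequency_mul_pos hmx
    ((antitone_tailMass h.integrable_sq hx).trans_lt hcrit)
  have hK : 0 ≤ u 0 ^ 2 / sin (κ * tailMass u 0) :=
    div_nonneg (sq_nonneg _) (sin_massFrequency_mul_pos hm hcrit).le
  rw [solitonOfHalfMass, soliton, abs_of_nonneg hx, halfSoliton_sq hK, ← mul_one_div,
    ← sin_massFrequency_mul_halfSolitonMass, ← h.tailMass_eq_halfSolitonMass hcrit hle hx hmx,
    ← h.sq_div_sin_eq hcrit hle hx hmx, div_mul_cancel₀ _ hsin.ne']

end AbsContH1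

end HalfLineEquality

section ReducedEnergy

theorem mass_comp_neg (u : ℝ → ℝ) : mass (fun x => u (-x)) = mass u :=
  integral_neg_eq_self (fun x => u x ^ 2) volume

theorem Ffun_comp_neg (p q : ℝ) (u u' : ℝ → ℝ) :
    Ffun p q (fun x => u (-x)) (fun x => -u' (-x)) = Ffun p q u u' := by
  simp only [Ffun, neg_sq, neg_zero]
  rw [integral_neg_eq_self (fun x => u' x ^ 2), integral_neg_eq_self fun x => |u x| ^ p]

theorem tailMass_le_mass {u : ℝ → ℝ} (hu2 : Integrable fun x => u x ^ 2) (x : ℝ) :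
    tailMass u x ≤ mass u :=
  setIntegral_le_integral hu2 (ae_of_all _ fun _ => sq_nonneg _)

namespace AbsContH1

variable {u u' : ℝ → ℝ} {q : ℝ}

theorem calibration_add_mul_pow_le (h : AbsContH1 u u') (hcrit : mass u < criticalMass) :
    (calibration (tailMass u 0) + calibration (tailMass (fun x => u (-x)) 0)) * u 0 ^ 4 ≤
      Ffun 6 q u u' + 1 / q * |u 0| ^ q := by
  have hright := h.calibration_mul_pow_le_tailEnergy
    ((tailMass_le_mass h.integrable_sq 0).trans_lt hcrit)
  have hleft := h.comp_neg.calibration_mul_pow_le_tailEnergy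
    (((tailMass_le_mass h.comp_neg.integrable_sq 0).trans_eq (mass_comp_neg u)).trans_lt hcrit)
  rw [neg_zero] at hleft
  linarith [h.Ffun_six_eq q]

theorem two_mul_calibration_half_mass_lt (h : AbsContH1 u u') (hcrit : mass u < criticalMass)
    (hu0 : u 0 ≠ 0) (hne : tailMass u 0 ≠ mass u / 2) :
    2 * calibration (mass u / 2) <
      calibration (tailMass u 0) + calibration (tailMass (fun x => u (-x)) 0) := by
  have hsum := tailMass_add_tailMass_comp_neg h.integrable_sq
  rw [← hsum] at hcrit hne ⊢
  refine two_mul_calibration_half_lt (tailMass_pos h.continuous h.integrable_sq hu0)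
    (tailMass_pos h.comp_neg.continuous h.comp_neg.integrable_sq (by rwa [neg_zero])) hcrit ?_
  contrapose hne
  linarith

theorem reducedEnergy_lt_Ffun (h : AbsContH1 u u') (hcrit : mass u < criticalMass)
    (hu0 : u 0 ≠ 0) (hne : tailMass u 0 ≠ mass u / 2) :
    reducedEnergy q (mass u) |u 0| < Ffun 6 q u u' := by
  have hlt := mul_lt_mul_of_pos_right (h.two_mul_calibration_half_mass_lt hcrit hu0 hne)
    (by positivity : 0 < u 0 ^ 4)
  rw [reducedEnergy, Even.pow_abs (by decide : Even 4)]
  linarith [h.calibration_add_mul_pow_le (q := q) hcrit]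

theorem tailMass_comp_neg_eq (h : AbsContH1 u u') (heq : tailMass u 0 = mass u / 2) :
    tailMass (fun x => u (-x)) 0 = mass u / 2 := by
  linarith [tailMass_add_tailMass_comp_neg h.integrable_sq]

theorem reducedEnergy_le_Ffun (h : AbsContH1 u u') (hcrit : mass u < criticalMass) :
    reducedEnergy q (mass u) |u 0| ≤ Ffun 6 q u u' := by
  by_cases hne : u 0 ≠ 0 ∧ tailMass u 0 ≠ mass u / 2
  · exact (h.reducedEnergy_lt_Ffun hcrit hne.1 hne.2).le
  have hle := h.calibration_add_mul_pow_le (q := q) hcrit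
  have heq : 2 * calibration (mass u / 2) * u 0 ^ 4 =
      (calibration (tailMass u 0) + calibration (tailMass (fun x => u (-x)) 0)) * u 0 ^ 4 := by
    rcases not_and_or.1 hne with hu0 | hm
    · rw [not_not.1 hu0, zero_pow four_ne_zero, mul_zero, mul_zero]
    · rw [not_not.1 hm, h.tailMass_comp_neg_eq (not_not.1 hm), two_mul]
  rw [reducedEnergy, Even.pow_abs (by decide : Even 4), heq]
  linarith

theorem sq_eq_solitonOfHalfMass_sq_of_Ffun_le (h : AbsContH1 u u') (hcrit : mass u < criticalMass)
    (hu0 : u 0 ≠ 0) (hle : Ffun 6 q u u' ≤ reducedEnergy q (mass u) |u 0|) {x : ℝ} (hx : 0 ≤ x) :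
    u x ^ 2 = solitonOfHalfMass (mass u / 2) (u 0) x ^ 2 := by
  have hm : tailMass u 0 = mass u / 2 := by
    by_contra hne
    exact (h.reducedEnergy_lt_Ffun hcrit hu0 hne).not_ge hle
  have hright_crit : tailMass u 0 < criticalMass :=
    (tailMass_le_mass h.integrable_sq 0).trans_lt hcrit
  have hleft := h.comp_neg.calibration_mul_pow_le_tailEnergy
    (by rwa [h.tailMass_comp_neg_eq hm, ← hm])
  rw [h.tailMass_comp_neg_eq hm, neg_zero] at hleft
  rw [reducedEnergy, Even.pow_abs (by decide : Even 4), h.Ffun_six_eq] at hle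
  rw [← hm]
  refine h.sq_eq_solitonOfHalfMass_sq hright_crit ?_ hu0 hx
  rw [hm]
  linarith

theorem eq_solitonOfHalfMass_of_Ffun_le (h : AbsContH1 u u') (hcrit : mass u < criticalMass)
    (hnonneg : ∀ x, 0 ≤ u x) (hu0 : u 0 ≠ 0)
    (hle : Ffun 6 q u u' ≤ reducedEnergy q (mass u) |u 0|) :
    u = solitonOfHalfMass (mass u / 2) (u 0) := by
  funext x
  refine (sq_eq_sq₀ (hnonneg x) (halfSoliton_nonneg _ _ _)).1 ?_
  rcases le_total 0 x with hx | hx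
  · exact h.sq_eq_solitonOfHalfMass_sq_of_Ffun_le hcrit hu0 hle hx
  · have hleft := h.comp_neg.sq_eq_solitonOfHalfMass_sq_of_Ffun_le (q := q)
      (by rwa [mass_comp_neg]) (by rwa [neg_zero])
      (by rwa [mass_comp_neg, Ffun_comp_neg, neg_zero]) (neg_nonneg.2 hx)
    rwa [mass_comp_neg, neg_zero, neg_neg, solitonOfHalfMass, soliton, abs_neg] at hleft

theorem reducedEnergy_le_Ffun_of_strict_min {a : ℝ} (h : AbsContH1 u u')
    (hcrit : mass u < criticalMass)
    (hmin : ∀ b, 0 ≤ b → b ≠ a → reducedEnergy q (mass u) a < reducedEnergy q (mass u) b) :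
    reducedEnergy q (mass u) a ≤ Ffun 6 q u u' := by
  refine le_trans ?_ (h.reducedEnergy_le_Ffun hcrit)
  rcases eq_or_ne |u 0| a with heq | hne
  · rw [heq]
  · exact (hmin _ (abs_nonneg _) hne).le

theorem eq_solitonOfHalfMass_of_strict_min {a : ℝ} (h : AbsContH1 u u')
    (hcrit : mass u < criticalMass) (ha : a ≠ 0)
    (hmin : ∀ b, 0 ≤ b → b ≠ a → reducedEnergy q (mass u) a < reducedEnergy q (mass u) b)
    (hnonneg : ∀ x, 0 ≤ u x) (hle : Ffun 6 q u u' ≤ reducedEnergy q (mass u) a) :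
    u = solitonOfHalfMass (mass u / 2) a := by
  have hvalue : |u 0| = a := by
    by_contra hne
    exact ((hmin _ (abs_nonneg _) hne).trans_le (h.reducedEnergy_le_Ffun hcrit)).not_ge hle
  have hu0 : u 0 = a := by rw [← hvalue, abs_of_nonneg (hnonneg 0)]
  rw [← hu0]
  exact h.eq_solitonOfHalfMass_of_Ffun_le hcrit hnonneg (hu0.trans_ne ha) (by rwa [hvalue])

end AbsContH1

theorem exists_strict_min_reducedEnergy {q μ : ℝ} (hq : 0 < q) (hq' : q < 4) (hμ : 0 < μ)
    (hμ' : μ < criticalMass) :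
    ∃ a > 0, reducedEnergy q μ a < 0 ∧
      ∀ b, 0 ≤ b → b ≠ a → reducedEnergy q μ a < reducedEnergy q μ b := by
  have hC : 0 < 2 * calibration (μ / 2) :=
    mul_pos two_pos (calibration_pos (half_pos hμ) (by linarith))
  have heq (b : ℝ) :
      reducedEnergy q μ b = 2 * calibration (μ / 2) * b ^ (4 : ℝ) - b ^ q / q := by
    rw [reducedEnergy, one_div_mul_eq_div, ← rpow_natCast b 4, Nat.cast_ofNat]
  simp only [heq]
  exact exists_strict_min_mul_rpow_sub_rpow_div hq hq' hC

end ReducedEnergy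

theorem stmt9_general (q μ : ℝ) (hq : 0 < q) (hq' : q < 4) (hμ : 0 < μ)
    (hμ' : μ < (Real.sqrt 3 / 2) * Real.pi) :
    (∃ C : ℝ, ∀ u u' : ℝ → ℝ, IsH1 u u' → mass u = μ → C ≤ Ffun 6 q u u') ∧
    (∃ u₀ u₀' : ℝ → ℝ, IsH1 u₀ u₀' ∧ mass u₀ = μ ∧ Ffun 6 q u₀ u₀' < 0) ∧
    (∃ u u' : ℝ → ℝ, IsH1 u u' ∧ mass u = μ ∧
      ∀ v v' : ℝ → ℝ, IsH1 v v' → mass v = μ → Ffun 6 q u u' ≤ Ffun 6 q v v') ∧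
    (∀ u u' v v' : ℝ → ℝ,
      IsH1 u u' → (∀ x, 0 ≤ u x) → mass u = μ →
      (∀ w w' : ℝ → ℝ, IsH1 w w' → mass w = μ → Ffun 6 q u u' ≤ Ffun 6 q w w') →
      IsH1 v v' → (∀ x, 0 ≤ v x) → mass v = μ →
      (∀ w w' : ℝ → ℝ, IsH1 w w' → mass w = μ → Ffun 6 q v v' ≤ Ffun 6 q w w') →
      u = v) := by
  obtain ⟨a, ha, hneg, hmin⟩ := exists_strict_min_reducedEnergy hq hq' hμ hμ'
  have hhalf : μ / 2 < criticalMass := (half_lt_self hμ).trans hμ'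
  have hsol := (absContH1_solitonOfHalfMass (half_pos hμ) hhalf ha).isH1
  have hmass := mass_solitonOfHalfMass (half_pos hμ) hhalf ha
  have henergy := Ffun_solitonOfHalfMass q (half_pos hμ) hhalf ha
  rw [mul_div_cancel₀ μ two_ne_zero] at hmass henergy
  have hbound (u u') (h : IsH1 u u') (hm : mass u = μ) : reducedEnergy q μ a ≤ Ffun 6 q u u' := by
    subst hm
    exact (h.absContH1 hμ.ne').reducedEnergy_le_Ffun_of_strict_min hμ' hmin
  have hunique {u u'} (h : IsH1 u u') (hnonneg : ∀ x, 0 ≤ u x) (hm : mass u = μ)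
      (hground : ∀ w w', IsH1 w w' → mass w = μ → Ffun 6 q u u' ≤ Ffun 6 q w w') :
      u = solitonOfHalfMass (μ / 2) a := by
    have hle := henergy ▸ hground _ _ hsol hmass
    subst hm
    exact (h.absContH1 hμ.ne').eq_solitonOfHalfMass_of_strict_min hμ' ha.ne' hmin hnonneg hle
  exact ⟨⟨_, hbound⟩, ⟨_, _, hsol, hmass, henergy.trans_lt hneg⟩,
    ⟨_, _, hsol, hmass, henergy ▸ hbound⟩, fun _ _ _ _ hu hu0 hum huground hv hv0 hvm hvground =>
      (hunique hu hu0 hum huground).trans (hunique hv hv0 hvm hvground).symm⟩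

theorem stmt9 (q μ : ℝ) (hq : 2 < q) (hq' : q < 4) (hμ : 0 < μ)
    (hμ' : μ < (Real.sqrt 3 / 2) * Real.pi) :
    (∃ C : ℝ, ∀ u u' : ℝ → ℝ, IsH1 u u' → mass u = μ → C ≤ Ffun 6 q u u') ∧
    (∃ u₀ u₀' : ℝ → ℝ, IsH1 u₀ u₀' ∧ mass u₀ = μ ∧ Ffun 6 q u₀ u₀' < 0) ∧
    (∃ u u' : ℝ → ℝ, IsH1 u u' ∧ mass u = μ ∧
      ∀ v v' : ℝ → ℝ, IsH1 v v' → mass v = μ → Ffun 6 q u u' ≤ Ffun 6 q v v') ∧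
    (∀ u u' v v' : ℝ → ℝ,
      IsH1 u u' → (∀ x, 0 ≤ u x) → mass u = μ →
      (∀ w w' : ℝ → ℝ, IsH1 w w' → mass w = μ → Ffun 6 q u u' ≤ Ffun 6 q w w') →
      IsH1 v v' → (∀ x, 0 ≤ v x) → mass v = μ →
      (∀ w w' : ℝ → ℝ, IsH1 w w' → mass w = μ → Ffun 6 q v v' ≤ Ffun 6 q w w') →
      u = v) :=
  stmt9_general q μ (by linarith) hq' hμ hμ'
end
end

section
/- Let 2 < p < 6 and μ ≥ 2. Then F_{p,4} is unbounded below on the mass-constraint set: for every M ∈ ℝ there exists u ∈ H¹(ℝ) with ‖u‖₂² = μ and F_{p,4}(u) < M. In particular no ground state of F_{p,4} at mass μ exists. -/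
open MeasureTheory Real Set

noncomputable section

/-!
The profile `A e^{-k|x|}` is extremal for `u(0)² ≤ ‖u‖₂ ‖u'‖₂`, and it makes every term of the
energy explicit. At mass `μ`, i.e. for `A = √(μk)`, the kinetic and the point energies both scale
like `k²` when `q = 4`, and together they contribute `k²μ(2 - μ)/4`. From `μ = 2` on this is not
positive, while the remaining term, a negative multiple of `k^{p/2-1}`, tends to `-∞` as the
profile concentrates at the origin.
-/

open Filter

theorem isH1_deriv_of_differentiableAt_off_countable {u : ℝ → ℝ} {s : Set ℝ} (hs : s.Countable)
    (hu : Continuous u) (hdiff : ∀ x ∉ s, DifferentiableAt ℝ u x)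
    (hu_sq : Integrable fun x => u x ^ 2) (hderiv_sq : Integrable fun x => deriv u x ^ 2) :
    IsH1 u (deriv u) := by
  have hderiv_loc : LocallyIntegrable (deriv u) :=
    ((memLp_two_iff_integrable_sq (measurable_deriv u).aestronglyMeasurable).2
      hderiv_sq).locallyIntegrable one_le_two
  refine ⟨hu, hu_sq, hderiv_sq, fun a b hab => ?_⟩
  exact (integral_eq_of_hasDerivAt_off_countable_of_le u (deriv u) hab hs hu.continuousOn
    (fun x hx => (hdiff x hx.2).hasDerivAt)
    (hderiv_loc.integrableOn_isCompact isCompact_uIcc).intervalIntegrable).symm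

theorem integral_exp_neg_mul_abs {c : ℝ} (hc : 0 < c) : ∫ x : ℝ, exp (-c * |x|) = 2 / c := by
  rw [integral_comp_abs (f := fun x => exp (-c * x)), integral_exp_mul_Ioi (neg_neg_of_pos hc),
    mul_zero, exp_zero, neg_div_neg_eq, mul_one_div]

theorem integrable_exp_neg_mul_abs {c : ℝ} (hc : 0 < c) :
    Integrable fun x : ℝ => exp (-c * |x|) :=
  .of_integral_ne_zero (integral_exp_neg_mul_abs hc ▸ (div_pos two_pos hc).ne')

/-- The exponential profile `A e^{-k|x|}` with amplitude `A`, decay rate `k` and a corner at the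
origin. -/
def peakon (A k x : ℝ) : ℝ :=
  A * exp (-k * |x|)

section Peakon

variable {A k p : ℝ}

theorem peakon_apply_zero : peakon A k 0 = A := by
  simp [peakon]

theorem continuous_peakon : Continuous (peakon A k) := by
  unfold peakon
  fun_prop

theorem hasDerivAt_peakon {x : ℝ} (hx : x ≠ 0) :
    HasDerivAt (peakon A k) (-k * SignType.sign x * peakon A k x) x :=
  (((hasDerivAt_abs hx).const_mul (-k)).exp.const_mul A).congr_deriv (by unfold peakon; ring)

theorem deriv_peakon_sq_ae_eq :
    (fun x => deriv (peakon A k) x ^ 2) =ᵐ[volume] fun x => k ^ 2 * peakon A k x ^ 2 := by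
  filter_upwards [Measure.ae_ne volume 0] with x hx
  have hsign : (SignType.sign x : ℝ) ^ 2 = 1 := by
    rcases hx.lt_or_gt with h | h <;> simp [h]
  rw [(hasDerivAt_peakon hx).deriv, mul_pow, mul_pow, hsign, neg_sq, mul_one]

theorem abs_peakon_rpow (x : ℝ) : |peakon A k x| ^ p = |A| ^ p * exp (-(p * k) * |x|) := by
  rw [peakon, abs_mul, abs_exp, mul_rpow (abs_nonneg A) (exp_nonneg _), ← exp_mul]
  ring_nf

theorem peakon_sq (x : ℝ) : peakon A k x ^ 2 = A ^ 2 * exp (-(2 * k) * |x|) := by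
  simpa only [rpow_two, sq_abs] using abs_peakon_rpow (A := A) (k := k) (p := 2) x

theorem integrable_peakon_sq (hk : 0 < k) : Integrable fun x => peakon A k x ^ 2 := by
  simp only [peakon_sq]
  exact (integrable_exp_neg_mul_abs (mul_pos two_pos hk)).const_mul _

theorem isH1_peakon (hk : 0 < k) : IsH1 (peakon A k) (deriv (peakon A k)) :=
  isH1_deriv_of_differentiableAt_off_countable (countable_singleton 0) continuous_peakon
    (fun _ hx => (hasDerivAt_peakon hx).differentiableAt) (integrable_peakon_sq hk)
    (((integrable_peakon_sq hk).const_mul _).congr deriv_peakon_sq_ae_eq.symm)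

theorem mass_peakon (hk : 0 < k) : mass (peakon A k) = A ^ 2 / k := by
  simp only [mass, peakon_sq]
  rw [integral_const_mul, integral_exp_neg_mul_abs (mul_pos two_pos hk)]
  field_simp

theorem integral_deriv_peakon_sq (hk : 0 < k) :
    ∫ x, deriv (peakon A k) x ^ 2 = k * A ^ 2 := by
  rw [integral_congr_ae deriv_peakon_sq_ae_eq, integral_const_mul, ← mass, mass_peakon hk]
  field_simp

theorem integral_abs_peakon_rpow (hp : 0 < p) (hk : 0 < k) :
    ∫ x, |peakon A k x| ^ p = |A| ^ p * (2 / (p * k)) := by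
  simp only [abs_peakon_rpow]
  rw [integral_const_mul, integral_exp_neg_mul_abs (mul_pos hp hk)]

theorem Ffun_peakon {q : ℝ} (hp : 0 < p) (hk : 0 < k) :
    Ffun p q (peakon A k) (deriv (peakon A k)) =
      1 / 2 * (k * A ^ 2) - 1 / p * (|A| ^ p * (2 / (p * k))) - 1 / q * |A| ^ q := by
  rw [Ffun, integral_deriv_peakon_sq hk, integral_abs_peakon_rpow hp hk, peakon_apply_zero]

end Peakon

section MassConstraint

variable {p μ k : ℝ}

theorem mass_peakon_sqrt (hμ : 0 ≤ μ) (hk : 0 < k) : mass (peakon √(μ * k) k) = μ := by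
  rw [mass_peakon hk, sq_sqrt (mul_nonneg hμ hk.le), mul_div_cancel_right₀ μ hk.ne']

theorem Ffun_four_peakon_sqrt (hp : 0 < p) (hμ : 0 ≤ μ) (hk : 0 < k) :
    Ffun p 4 (peakon √(μ * k) k) (deriv (peakon √(μ * k) k)) =
      k ^ 2 * μ * (2 - μ) / 4 - 2 / p ^ 2 * μ ^ (p / 2) * k ^ (p / 2 - 1) := by
  have hμk : 0 ≤ μ * k := mul_nonneg hμ hk.le
  have hpow : √(μ * k) ^ p = μ ^ (p / 2) * k ^ (p / 2 - 1) * k := by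
    rw [sqrt_eq_rpow, ← rpow_mul hμk, one_div_mul_eq_div, mul_rpow hμ hk.le, mul_assoc,
      ← rpow_add_one hk.ne', sub_add_cancel]
  have hpow_four : √(μ * k) ^ (4 : ℝ) = (μ * k) ^ 2 := by
    rw [sqrt_eq_rpow, ← rpow_mul hμk, ← rpow_two]
    norm_num
  rw [Ffun_peakon hp hk, abs_of_nonneg (sqrt_nonneg _), sq_sqrt hμk, hpow, hpow_four]
  field_simp
  ring

theorem tendsto_Ffun_four_peakon_sqrt_atBot (hp : 2 < p) (hμ : 2 ≤ μ) :
    Tendsto (fun k => Ffun p 4 (peakon √(μ * k) k) (deriv (peakon √(μ * k) k))) atTop atBot := by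
  have hcoeff : 0 < 2 / p ^ 2 * μ ^ (p / 2) := by positivity
  have hpower : Tendsto (fun k : ℝ => 2 / p ^ 2 * μ ^ (p / 2) * k ^ (p / 2 - 1)) atTop atTop :=
    (tendsto_rpow_atTop (by linarith)).const_mul_atTop hcoeff
  refine tendsto_atBot_mono' _ ?_ (tendsto_neg_atTop_atBot.comp hpower)
  filter_upwards [eventually_gt_atTop 0] with k hk
  have hquadratic : k ^ 2 * μ * (2 - μ) ≤ 0 :=
    mul_nonpos_of_nonneg_of_nonpos (by positivity) (sub_nonpos.2 hμ)
  rw [Ffun_four_peakon_sqrt (by linarith) (by linarith) hk, Function.comp_apply]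
  linarith

theorem exists_isH1_mass_eq_Ffun_four_lt (hp : 2 < p) (hμ : 2 ≤ μ) (M : ℝ) :
    ∃ u u' : ℝ → ℝ, IsH1 u u' ∧ mass u = μ ∧ Ffun p 4 u u' < M := by
  obtain ⟨k, henergy, hk⟩ := (((tendsto_Ffun_four_peakon_sqrt_atBot hp hμ).eventually_lt_atBot
    M).and (eventually_gt_atTop 0)).exists
  exact ⟨_, _, isH1_peakon hk, mass_peakon_sqrt (by linarith) hk, henergy⟩

end MassConstraint

theorem stmt12_general (p μ : ℝ) (hp : 2 < p) (hμ : 2 ≤ μ) :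
    (∀ M : ℝ, ∃ u u' : ℝ → ℝ, IsH1 u u' ∧ mass u = μ ∧ Ffun p 4 u u' < M) ∧
    ¬ (∃ u u' : ℝ → ℝ, IsH1 u u' ∧ mass u = μ ∧
        ∀ v v' : ℝ → ℝ, IsH1 v v' → mass v = μ → Ffun p 4 u u' ≤ Ffun p 4 v v') := by
  have unbounded := exists_isH1_mass_eq_Ffun_four_lt hp hμ
  refine ⟨unbounded, ?_⟩
  rintro ⟨u, u', -, -, hmin⟩
  obtain ⟨v, v', hv, hmass, hlt⟩ := unbounded (Ffun p 4 u u')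
  exact hlt.not_ge (hmin v v' hv hmass)

theorem stmt12 (p μ : ℝ) (hp : 2 < p) (hp' : p < 6) (hμ : 2 ≤ μ) :
    (∀ M : ℝ, ∃ u u' : ℝ → ℝ, IsH1 u u' ∧ mass u = μ ∧ Ffun p 4 u u' < M) ∧
    ¬ (∃ u u' : ℝ → ℝ, IsH1 u u' ∧ mass u = μ ∧
        ∀ v v' : ℝ → ℝ, IsH1 v v' → mass v = μ → Ffun p 4 u u' ≤ Ffun p 4 v v') :=
  stmt12_general p μ hp hμ
end
end
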